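/- Let k > 0 and β ∈ (1/2, 1). Then lim_{T→∞} (1/T) ∫₀^T ( ∫₀^t ∫₀^t e^{−k(2t−u−v)} D(u,v) du dv ) dt = C_β Γ(2β−1) k^{−2β}. -/

import Mathlib

open MeasureTheory Filter

/-!
Write `a = 2β - 2`, `b = β - 1` and `Q_t = (0,t)²`. For `t > 0` the inner double integral is
`V(t) = ∫_{Q_t} e^{-k(2t-u-v)} D(u,v)`, and the bound on `D` splits it as `C_β` times a stationary
part plus a remainder.

* Reflecting `(u,v) ↦ (t-u,t-v)` turns the stationary part into
  `∫_{Q_t} e^{-k(x+y)} |x-y|^a`, which increases to the integral over the whole quadrant. The shear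
  `y = x + z` and integration in `x` reduce the latter to `∫ |z|^a e^{-k|z|} / (2k) dz`, which is
  `Γ(a+1) k^{-(a+2)}` (`ouKernel_integrable_and_integral`, `main_tendsto`).
* The remainder is at most `C'_β B(t)²` with `B(t) = ∫₀ᵗ e^{-k(t-u)} u^b du`
  (`variance_sub_main_le`), and `B(t) → 0` (`ouWeight_integral_tendsto`).

So `V` converges to the claimed limit. It is also bounded and measurable on `(0,∞)`, so its Cesàro
mean `∫₀¹ V(Ts) ds` has the same limit by dominated convergence (`cesaro_of_bounded`).
-/

/-! ### The stationary kernel on the quadrant -/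

/-- The kernel `e^{-k(x+y)} |x-y|^a` on the open quadrant `x, y > 0`, extended by zero to the
plane. -/
noncomputable def ouKernel (k a : ℝ) : ℝ × ℝ → ℝ :=
  (Set.Ioi (0:ℝ) ×ˢ Set.Ioi (0:ℝ)).indicator
    (fun p => Real.exp (-k * (p.1 + p.2)) * |p.1 - p.2| ^ a)

lemma ouKernel_measurable (k a : ℝ) : Measurable (ouKernel k a) := by
  unfold ouKernel
  refine Measurable.indicator ?_ (measurableSet_Ioi.prod measurableSet_Ioi)
  fun_prop

lemma ouKernel_nonneg (k a : ℝ) (p : ℝ × ℝ) : 0 ≤ ouKernel k a p := by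
  unfold ouKernel
  exact Set.indicator_nonneg (fun p _ => by positivity) p

/-- Along a line `y = x + z` the quadrant is the half-line `x > max 0 (-z)`, and the kernel is a
pure exponential in `x`. -/
lemma ouKernel_shear (k a z : ℝ) :
    (fun x => ouKernel k a (x, x + z)) = (Set.Ioi (max 0 (-z))).indicator
      (fun x => Real.exp ((-(2 * k)) * x) * (Real.exp (-k * z) * |z| ^ a)) := by
  funext x
  unfold ouKernel
  by_cases h : max 0 (-z) < x
  · have h' := max_lt_iff.1 h
    rw [Set.indicator_of_mem (show x ∈ Set.Ioi (max 0 (-z)) from h), Set.indicator_of_mem]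
    · rw [← mul_assoc, ← Real.exp_add]
      dsimp only
      rw [show x - (x + z) = -z by ring, abs_neg]
      ring_nf
    · exact ⟨h'.1, by simp only [Set.mem_Ioi]; linarith⟩
  · rw [Set.indicator_of_notMem (show x ∉ Set.Ioi (max 0 (-z)) from h), Set.indicator_of_notMem]
    rintro ⟨h1, h2⟩
    simp only [Set.mem_Ioi] at h1 h2
    exact h (max_lt h1 (by linarith))

lemma ouKernel_shear_integrable {k : ℝ} (hk : 0 < k) (a z : ℝ) :
    Integrable (fun x => ouKernel k a (x, x + z)) := by
  rw [ouKernel_shear, integrable_indicator_iff measurableSet_Ioi]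
  exact (integrableOn_exp_mul_Ioi (by linarith) _).mul_const _

/-- The weight `e^{-kz} e^{-2k max(0,-z)}` collapses to `e^{-k|z|}`, so the two sides of the
diagonal need no separate treatment. -/
lemma ouKernel_shear_integral {k : ℝ} (hk : 0 < k) (a z : ℝ) :
    ∫ x, ouKernel k a (x, x + z) = |z| ^ a * Real.exp (-(k * |z|)) / (2 * k) := by
  rw [ouKernel_shear, integral_indicator measurableSet_Ioi, integral_mul_const,
    integral_exp_mul_Ioi (by linarith)]
  have : Real.exp (-(2 * k) * max 0 (-z)) * Real.exp (-k * z) = Real.exp (-(k * |z|)) := by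
    rw [← Real.exp_add]
    congr 1
    rcases le_total 0 z with h | h
    · rw [max_eq_left (by linarith), abs_of_nonneg h]; ring
    · rw [max_eq_right (by linarith), abs_of_nonpos h]; ring
  rw [← this]
  field_simp

lemma integral_abs_rpow_exp {k a : ℝ} (hk : 0 < k) (ha : -1 < a) :
    ∫ z : ℝ, |z| ^ a * Real.exp (-(k * |z|)) / (2 * k)
      = Real.Gamma (a + 1) * k ^ (-(a + 2)) := by
  rw [integral_comp_abs (f := fun z => z ^ a * Real.exp (-(k * z)) / (2 * k)), integral_div]
  have := Real.integral_rpow_mul_exp_neg_mul_Ioi (a := a + 1) (r := k) (by linarith) hk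
  rw [add_sub_cancel_right] at this
  have h2 : k ^ (a + 2) = k ^ (a + 1) * k := by
    rw [← Real.rpow_add_one hk.ne']; ring_nf
  rw [this, one_div, Real.inv_rpow hk.le, Real.rpow_neg hk.le, h2]
  have h3 : k ^ (a + 1) ≠ 0 := by positivity
  generalize k ^ (a + 1) = P at h3
  field_simp

/-- The Bochner integral of a non-integrable function is `0`, so integrability follows from the
integral being positive. -/
lemma integrable_abs_rpow_exp {k a : ℝ} (hk : 0 < k) (ha : -1 < a) :
    Integrable (fun z : ℝ => |z| ^ a * Real.exp (-(k * |z|)) / (2 * k)) := by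
  by_contra h
  have h1 := integral_undef h
  rw [integral_abs_rpow_exp hk ha] at h1
  have : 0 < Real.Gamma (a + 1) := Real.Gamma_pos_of_pos (by linarith)
  have : 0 < Real.Gamma (a + 1) * k ^ (-(a + 2)) := by positivity
  linarith

lemma ouKernel_integrable_and_integral {k a : ℝ} (hk : 0 < k) (ha : -1 < a) :
    Integrable (ouKernel k a) ∧
      ∫ p, ouKernel k a p = Real.Gamma (a + 1) * k ^ (-(a + 2)) := by
  have hmp : MeasurePreserving (MeasurableEquiv.shearAddRight ℝ)
      (volume : Measure (ℝ × ℝ)) volume := measurePreserving_prod_add volume volume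
  have hint : Integrable (ouKernel k a ∘ MeasurableEquiv.shearAddRight ℝ)
      (volume : Measure (ℝ × ℝ)) := by
    rw [Measure.volume_eq_prod, integrable_prod_iff']
    · refine ⟨Eventually.of_forall fun z => ouKernel_shear_integrable hk a z, ?_⟩
      have : (fun y => ∫ x, ‖(ouKernel k a ∘ MeasurableEquiv.shearAddRight ℝ) (x, y)‖) =
          fun z : ℝ => |z| ^ a * Real.exp (-(k * |z|)) / (2 * k) := by
        funext z
        rw [← ouKernel_shear_integral hk a z]
        refine integral_congr_ae (Eventually.of_forall fun x => ?_)
        exact Real.norm_of_nonneg (ouKernel_nonneg k a _)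
      rw [this]
      exact integrable_abs_rpow_exp hk ha
    · exact ((ouKernel_measurable k a).comp
        (MeasurableEquiv.shearAddRight ℝ).measurable).aestronglyMeasurable
  refine ⟨(hmp.integrable_comp_emb (MeasurableEquiv.measurableEmbedding _)).1 hint, ?_⟩
  rw [← hmp.integral_comp', ← integral_abs_rpow_exp hk ha]
  rw [Measure.volume_eq_prod] at hint ⊢
  refine (integral_prod_symm _ hint).trans ?_
  refine integral_congr_ae (Eventually.of_forall fun z => ?_)
  exact ouKernel_shear_integral hk a z

/-! ### Cesàro means -/

lemma cesaro_of_bounded {f : ℝ → ℝ} {M L : ℝ} (hf : Measurable f)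
    (hM : ∀ t, 0 < t → |f t| ≤ M) (hL : Tendsto f atTop (nhds L)) :
    Tendsto (fun T : ℝ => (1 / T) * ∫ t in (0:ℝ)..T, f t) atTop (nhds L) := by
  -- After the substitution `t = T s` the mean becomes an integral over the fixed interval `[0,1]`.
  have key : Tendsto (fun T : ℝ => ∫ s in (0:ℝ)..1, f (T * s)) atTop
      (nhds (∫ _ in (0:ℝ)..1, L)) := by
    refine intervalIntegral.tendsto_integral_filter_of_dominated_convergence (fun _ => M)
      ?_ ?_ intervalIntegrable_const ?_
    · exact Eventually.of_forall fun T => (hf.comp (by fun_prop)).aestronglyMeasurable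
    · filter_upwards [eventually_gt_atTop 0] with T hT
      refine Eventually.of_forall fun s hs => ?_
      rw [Set.uIoc_of_le zero_le_one] at hs
      exact hM _ (mul_pos hT hs.1)
    · refine Eventually.of_forall fun s hs => ?_
      rw [Set.uIoc_of_le zero_le_one] at hs
      exact hL.comp (tendsto_id.atTop_mul_const hs.1)
  rw [intervalIntegral.integral_const, sub_zero, one_smul] at key
  refine key.congr' ?_
  filter_upwards [eventually_gt_atTop 0] with T hT
  rw [intervalIntegral.integral_comp_mul_left _ hT.ne']
  simp

/-! ### The remainder weight -/

/-- The one-dimensional weight `e^{-k(t-u)} u^b`; the product of two of them, with `b = β - 1`,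
dominates the non-stationary part of the covariance. -/
noncomputable def ouWeight (k b t u : ℝ) : ℝ := Real.exp (-k * (t - u)) * u ^ b

lemma ouWeight_integrable (k t : ℝ) {b : ℝ} (hb : -1 < b) :
    IntervalIntegrable (ouWeight k b t) volume 0 t := by
  unfold ouWeight
  exact (intervalIntegral.intervalIntegrable_rpow' hb).continuousOn_mul (by fun_prop)

lemma ouWeight_integral_nonneg (k b : ℝ) {t : ℝ} (ht : 0 < t) :
    0 ≤ ∫ u in (0:ℝ)..t, ouWeight k b t u := by
  refine intervalIntegral.integral_nonneg ht.le fun u hu => ?_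
  have := hu.1
  unfold ouWeight; positivity

/-- Crude bound dropping the exponential; it controls the weight for bounded `t`. -/
lemma ouWeight_integral_le_rpow {k b t : ℝ} (hk : 0 < k) (hb : -1 < b) (ht : 0 < t) :
    ∫ u in (0:ℝ)..t, ouWeight k b t u ≤ t ^ (b + 1) / (b + 1) := by
  have : ∫ u in (0:ℝ)..t, u ^ b = t ^ (b + 1) / (b + 1) := by
    rw [integral_rpow (Or.inl hb), Real.zero_rpow (by linarith), sub_zero]
  rw [← this]
  refine intervalIntegral.integral_mono_on ht.le (ouWeight_integrable k t hb)
    (intervalIntegral.intervalIntegrable_rpow' hb) fun u hu => ?_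
  unfold ouWeight
  have h0 : 0 ≤ u ^ b := Real.rpow_nonneg hu.1 _
  refine mul_le_of_le_one_left h0 (Real.exp_le_one_iff.2 ?_)
  have : 0 ≤ k * (t - u) := mul_nonneg hk.le (by linarith [hu.2])
  linarith

/-- Where `u ≤ t/2` the exponential is at most `e^{-kt/2}`, and where `u ≥ t/2` the power is at
most `(t/2)^b`; the sum of the two resulting bounds is valid on all of `[0,t]`. -/
lemma ouWeight_integral_le {k b t : ℝ} (hk : 0 < k) (hb : -1 < b) (hb0 : b < 0) (ht : 0 < t) :
    ∫ u in (0:ℝ)..t, ouWeight k b t u ≤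
      Real.exp (-(k / 2) * t) * (t ^ (b + 1) / (b + 1)) + (t / 2) ^ b * (1 / k) := by
  have e1 : ∫ u in (0:ℝ)..t, u ^ b = t ^ (b + 1) / (b + 1) := by
    rw [integral_rpow (Or.inl hb), Real.zero_rpow (by linarith), sub_zero]
  have e2 : ∫ u in (0:ℝ)..t, Real.exp (-k * (t - u)) ≤ 1 / k := by
    rw [intervalIntegral.integral_comp_sub_left (fun x => Real.exp (-k * x)) t, sub_self, sub_zero,
      intervalIntegral.integral_comp_mul_left (fun x => Real.exp x) (neg_ne_zero.2 hk.ne'),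
      integral_exp, smul_eq_mul, mul_zero, Real.exp_zero]
    have := Real.exp_pos (-k * t)
    rw [inv_neg, one_div]
    have hk' : 0 < k⁻¹ := by positivity
    nlinarith
  have i1 : IntervalIntegrable (fun u : ℝ => Real.exp (-(k / 2) * t) * u ^ b) volume 0 t :=
    (intervalIntegral.intervalIntegrable_rpow' hb).const_mul _
  have i2 : IntervalIntegrable (fun u : ℝ => (t / 2) ^ b * Real.exp (-k * (t - u))) volume 0 t :=
    Continuous.intervalIntegrable (by fun_prop) _ _
  calc ∫ u in (0:ℝ)..t, ouWeight k b t u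
      ≤ ∫ u in (0:ℝ)..t, (Real.exp (-(k / 2) * t) * u ^ b
          + (t / 2) ^ b * Real.exp (-k * (t - u))) := by
        refine intervalIntegral.integral_mono_on ht.le (ouWeight_integrable k t hb)
          (i1.add i2) fun u hu => ?_
        unfold ouWeight
        have h0 : 0 ≤ u ^ b := Real.rpow_nonneg hu.1 _
        rcases le_total u (t / 2) with h | h
        · have : Real.exp (-k * (t - u)) ≤ Real.exp (-(k / 2) * t) :=
            Real.exp_le_exp.2 (by nlinarith)
          have h1 : 0 ≤ (t / 2) ^ b * Real.exp (-k * (t - u)) := by positivity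
          nlinarith
        · have : u ^ b ≤ (t / 2) ^ b := Real.rpow_le_rpow_of_nonpos (by linarith) h hb0.le
          have h1 : 0 ≤ Real.exp (-(k / 2) * t) * u ^ b := by positivity
          have := mul_le_mul_of_nonneg_left this (Real.exp_pos (-k * (t - u))).le
          linarith
    _ ≤ _ := by
        rw [intervalIntegral.integral_add i1 i2, intervalIntegral.integral_const_mul,
          intervalIntegral.integral_const_mul, e1]
        gcongr

lemma ouWeight_integral_tendsto {k b : ℝ} (hk : 0 < k) (hb : -1 < b) (hb0 : b < 0) :
    Tendsto (fun t => ∫ u in (0:ℝ)..t, ouWeight k b t u) atTop (nhds 0) := by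
  have h1 : Tendsto (fun t : ℝ => Real.exp (-(k / 2) * t) * (t ^ (b + 1) / (b + 1)))
      atTop (nhds 0) := by
    have := (tendsto_rpow_mul_exp_neg_mul_atTop_nhds_zero (b + 1) (k / 2)
      (by positivity)).div_const (b + 1)
    rw [zero_div] at this
    exact this.congr fun t => by ring
  have h2 : Tendsto (fun t : ℝ => (t / 2) ^ b * (1 / k)) atTop (nhds 0) := by
    have h := (tendsto_rpow_neg_atTop (y := -b) (by linarith)).comp
      (tendsto_id.atTop_div_const (two_pos (α := ℝ)))
    simpa using h.mul_const (1 / k)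
  have h3 := h1.add h2
  rw [add_zero] at h3
  refine tendsto_of_tendsto_of_tendsto_of_le_of_le' tendsto_const_nhds h3 ?_ ?_
  · filter_upwards [eventually_gt_atTop 0] with t ht using ouWeight_integral_nonneg k b ht
  · filter_upwards [eventually_gt_atTop 0] with t ht using ouWeight_integral_le hk hb hb0 ht

lemma ouWeight_integral_bounded {k b : ℝ} (hk : 0 < k) (hb : -1 < b) (hb0 : b < 0) :
    ∃ M, ∀ t, 0 < t → ∫ u in (0:ℝ)..t, ouWeight k b t u ≤ M := by
  obtain ⟨t₀, ht₀⟩ := eventually_atTop.1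
    ((ouWeight_integral_tendsto hk hb hb0).eventually (eventually_le_nhds zero_lt_one))
  refine ⟨max 1 (t₀ ^ (b + 1) / (b + 1)), fun t ht => ?_⟩
  rcases le_total t₀ t with h | h
  · exact (ht₀ t h).trans (le_max_left _ _)
  · refine (ouWeight_integral_le_rpow hk hb ht).trans (le_trans ?_ (le_max_right _ _))
    have : 0 < b + 1 := by linarith
    gcongr

/-! ### The stationary part of the variance -/

/-- The open square `(0,t)²`, empty for `t ≤ 0`. It is taken open so that the hypothesis on `D`,
which requires positive arguments, applies on it, and so that the reflection `p ↦ (t,t) - p`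
preserves it. -/
def openSquare (t : ℝ) : Set (ℝ × ℝ) := Set.Ioo 0 t ×ˢ Set.Ioo 0 t

lemma measurableSet_openSquare (t : ℝ) : MeasurableSet (openSquare t) :=
  measurableSet_Ioo.prod measurableSet_Ioo

lemma ouKernel_reflect (k a : ℝ) {t : ℝ} {p : ℝ × ℝ} (hp : p ∈ openSquare t) :
    ouKernel k a ((t, t) - p) = Real.exp (-k * (2 * t - p.1 - p.2)) * |p.1 - p.2| ^ a := by
  obtain ⟨⟨h1, h2⟩, h3, h4⟩ := hp
  unfold ouKernel
  rw [Set.indicator_of_mem]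
  · simp only [Prod.fst_sub, Prod.snd_sub]
    rw [show t - p.1 - (t - p.2) = -(p.1 - p.2) by ring, abs_neg,
      show t - p.1 + (t - p.2) = 2 * t - p.1 - p.2 by ring]
  · simp only [Set.mem_prod, Set.mem_Ioi, Prod.fst_sub, Prod.snd_sub]
    exact ⟨by linarith, by linarith⟩

lemma main_integrableOn {k a : ℝ} (hk : 0 < k) (ha : -1 < a) (t : ℝ) :
    IntegrableOn (fun p : ℝ × ℝ => Real.exp (-k * (2 * t - p.1 - p.2)) * |p.1 - p.2| ^ a)
      (openSquare t) :=
  (((ouKernel_integrable_and_integral hk ha).1.comp_sub_left (t, t)).integrableOn).congr_fun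
    (fun _ hp => ouKernel_reflect k a hp) (measurableSet_openSquare t)

lemma main_integral (k a t : ℝ) :
    ∫ p in openSquare t, Real.exp (-k * (2 * t - p.1 - p.2)) * |p.1 - p.2| ^ a
      = ∫ p in openSquare t, ouKernel k a p := by
  rw [← setIntegral_congr_fun (measurableSet_openSquare t)
    (fun _ hp => ouKernel_reflect k a hp),
    ← integral_indicator (measurableSet_openSquare t),
    ← integral_indicator (measurableSet_openSquare t),
    ← integral_sub_left_eq_self _ _ ((t, t) : ℝ × ℝ)]
  refine integral_congr_ae (Eventually.of_forall fun p => ?_)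
  have : p ∈ openSquare t ↔ (t, t) - p ∈ openSquare t := by
    simp only [openSquare, Set.mem_prod, Set.mem_Ioo, Prod.fst_sub, Prod.snd_sub]
    constructor <;> rintro ⟨⟨_, _⟩, _, _⟩ <;> refine ⟨⟨?_, ?_⟩, ?_, ?_⟩ <;> linarith
  by_cases h : p ∈ openSquare t
  · simp [h, this.1 h]
  · simp [h, mt this.2 h]

/-- The squares exhaust the quadrant, and `ouKernel` itself is the dominating function. -/
lemma main_tendsto {k a : ℝ} (hk : 0 < k) (ha : -1 < a) :
    Tendsto (fun t => ∫ p in openSquare t, ouKernel k a p) atTop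
      (nhds (Real.Gamma (a + 1) * k ^ (-(a + 2)))) := by
  obtain ⟨hi, he⟩ := ouKernel_integrable_and_integral hk ha
  rw [← he]
  simp_rw [← integral_indicator (measurableSet_openSquare _)]
  refine tendsto_integral_filter_of_dominated_convergence (ouKernel k a) ?_ ?_ hi ?_
  · exact Eventually.of_forall fun t =>
      ((ouKernel_measurable k a).indicator (measurableSet_openSquare t)).aestronglyMeasurable
  · refine Eventually.of_forall fun t => Eventually.of_forall fun p => ?_
    refine (norm_indicator_le_norm_self _ _).trans_eq ?_
    exact Real.norm_of_nonneg (ouKernel_nonneg k a p)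
  · refine Eventually.of_forall fun p => tendsto_const_nhds.congr' ?_
    filter_upwards [eventually_gt_atTop p.1, eventually_gt_atTop p.2] with t h1 h2
    by_cases h : p ∈ Set.Ioi (0:ℝ) ×ˢ Set.Ioi (0:ℝ)
    · rw [Set.indicator_of_mem]
      exact ⟨⟨h.1, h1⟩, h.2, h2⟩
    · rw [Set.indicator_of_notMem fun h' => h ⟨h'.1.1, h'.2.1⟩]
      exact Set.indicator_of_notMem h _

lemma main_le {k a : ℝ} (hk : 0 < k) (ha : -1 < a) (t : ℝ) :
    |∫ p in openSquare t, ouKernel k a p| ≤ Real.Gamma (a + 1) * k ^ (-(a + 2)) := by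
  obtain ⟨hi, he⟩ := ouKernel_integrable_and_integral hk ha
  have h0 := Eventually.of_forall (f := ae volume) (ouKernel_nonneg k a)
  rw [abs_of_nonneg (integral_nonneg (ouKernel_nonneg k a)), ← he]
  exact setIntegral_le_integral hi h0

lemma ae_off_diagonal : ∀ᵐ p : ℝ × ℝ, p.1 ≠ p.2 := by
  rw [Measure.volume_eq_prod, Measure.ae_prod_iff_ae_ae]
  · refine Eventually.of_forall fun x => ?_
    filter_upwards [Measure.ae_ne volume x] with y hy using hy.symm
  · exact (measurableSet_eq_fun measurable_fst measurable_snd).compl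

lemma weight_prod (k b : ℝ) {t : ℝ} {p : ℝ × ℝ} (hp : p ∈ openSquare t) :
    ouWeight k b t p.1 * ouWeight k b t p.2
      = Real.exp (-k * (2 * t - p.1 - p.2)) * (p.1 * p.2) ^ b := by
  unfold ouWeight
  rw [Real.mul_rpow hp.1.1.le hp.2.1.le, mul_mul_mul_comm, ← Real.exp_add]
  ring_nf

lemma weight_integrableOn (k : ℝ) {b t : ℝ} (hb : -1 < b) (ht : 0 < t) :
    IntegrableOn (fun p : ℝ × ℝ => ouWeight k b t p.1 * ouWeight k b t p.2) (openSquare t) := by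
  have h := (intervalIntegrable_iff_integrableOn_Ioo_of_le ht.le).1 (ouWeight_integrable k t hb)
  unfold IntegrableOn openSquare
  rw [Measure.volume_eq_prod, ← Measure.prod_restrict]
  exact h.mul_prod h

lemma weight_integral (k b : ℝ) {t : ℝ} (ht : 0 < t) :
    ∫ p in openSquare t, ouWeight k b t p.1 * ouWeight k b t p.2
      = (∫ u in (0:ℝ)..t, ouWeight k b t u) ^ 2 := by
  unfold openSquare
  rw [Measure.volume_eq_prod, ← Measure.prod_restrict, integral_prod_mul,
    intervalIntegral.integral_of_le ht.le, integral_Ioc_eq_integral_Ioo, sq]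

/-! ### The variance for a covariance density `D` -/

section Covariance

variable {k β Cβ Cβ' : ℝ} {D : ℝ → ℝ → ℝ}

/-- The hypothesis on `D` says nothing on the diagonal, hence the bound holds only almost
everywhere. -/
lemma remainder_bound
    (hDbound : ∀ t s : ℝ, 0 < t → 0 < s → t ≠ s →
      |D t s - Cβ * |t - s| ^ (2 * β - 2)| ≤ Cβ' * (t * s) ^ (β - 1)) (t : ℝ) :
    ∀ᵐ p ∂(volume.restrict (openSquare t)),
      ‖Real.exp (-k * (2 * t - p.1 - p.2)) * D p.1 p.2
        - Cβ * (Real.exp (-k * (2 * t - p.1 - p.2)) * |p.1 - p.2| ^ (2 * β - 2))‖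
      ≤ Cβ' * (ouWeight k (β - 1) t p.1 * ouWeight k (β - 1) t p.2) := by
  filter_upwards [ae_restrict_of_ae ae_off_diagonal,
    ae_restrict_mem (measurableSet_openSquare t)] with p hne hp
  have h := mul_le_mul_of_nonneg_left (hDbound p.1 p.2 hp.1.1 hp.2.1 hne)
    (Real.exp_pos (-k * (2 * t - p.1 - p.2))).le
  rw [weight_prod k _ hp, Real.norm_eq_abs]
  rw [← abs_of_pos (Real.exp_pos (-k * (2 * t - p.1 - p.2))), ← abs_mul,
    abs_of_pos (Real.exp_pos (-k * (2 * t - p.1 - p.2)))] at h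
  calc _ = _ := by congr 1; ring
    _ ≤ _ := h
    _ = _ := by ring

lemma remainder_integrableOn (hβ : β ∈ Set.Ioo (1 / 2 : ℝ) 1)
    (hD : Measurable (Function.uncurry D))
    (hDbound : ∀ t s : ℝ, 0 < t → 0 < s → t ≠ s →
      |D t s - Cβ * |t - s| ^ (2 * β - 2)| ≤ Cβ' * (t * s) ^ (β - 1)) {t : ℝ} (ht : 0 < t) :
    IntegrableOn (fun p : ℝ × ℝ => Real.exp (-k * (2 * t - p.1 - p.2)) * D p.1 p.2
        - Cβ * (Real.exp (-k * (2 * t - p.1 - p.2)) * |p.1 - p.2| ^ (2 * β - 2)))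
      (openSquare t) := by
  refine ((weight_integrableOn k (by linarith [hβ.1]) ht).const_mul Cβ').mono' ?_
    (remainder_bound hDbound t)
  have hD' : Measurable fun p : ℝ × ℝ => D p.1 p.2 := hD
  exact (Measurable.sub (Measurable.mul (by fun_prop) hD') (by fun_prop)).aestronglyMeasurable

lemma variance_integrableOn (hk : 0 < k) (hβ : β ∈ Set.Ioo (1 / 2 : ℝ) 1)
    (hD : Measurable (Function.uncurry D))
    (hDbound : ∀ t s : ℝ, 0 < t → 0 < s → t ≠ s →
      |D t s - Cβ * |t - s| ^ (2 * β - 2)| ≤ Cβ' * (t * s) ^ (β - 1)) {t : ℝ} (ht : 0 < t) :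
    IntegrableOn (fun p : ℝ × ℝ => Real.exp (-k * (2 * t - p.1 - p.2)) * D p.1 p.2)
      (openSquare t) := by
  have h := (remainder_integrableOn (k := k) hβ hD hDbound ht).add
    ((main_integrableOn hk (a := 2 * β - 2) (by linarith [hβ.1]) t).const_mul Cβ)
  refine h.congr (Eventually.of_forall fun p => ?_)
  simp

lemma variance_sub_main_le (hk : 0 < k) (hβ : β ∈ Set.Ioo (1 / 2 : ℝ) 1)
    (hD : Measurable (Function.uncurry D))
    (hDbound : ∀ t s : ℝ, 0 < t → 0 < s → t ≠ s →
      |D t s - Cβ * |t - s| ^ (2 * β - 2)| ≤ Cβ' * (t * s) ^ (β - 1)) {t : ℝ} (ht : 0 < t) :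
    |(∫ p in openSquare t, Real.exp (-k * (2 * t - p.1 - p.2)) * D p.1 p.2)
        - Cβ * ∫ p in openSquare t, ouKernel k (2 * β - 2) p|
      ≤ Cβ' * (∫ u in (0:ℝ)..t, ouWeight k (β - 1) t u) ^ 2 := by
  rw [← main_integral, ← integral_const_mul, ← integral_sub
    (variance_integrableOn hk hβ hD hDbound ht)
    ((main_integrableOn hk (by linarith [hβ.1]) t).const_mul Cβ),
    ← weight_integral k _ ht, ← integral_const_mul]
  exact norm_integral_le_of_norm_le
    ((weight_integrableOn k (by linarith [hβ.1]) ht).const_mul Cβ') (remainder_bound hDbound t)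

/-- Measurability of the variance in `t`, valid for every real `t`: moving the domain into an
indicator makes it a parametric integral of a jointly measurable function. -/
lemma variance_measurable (hD : Measurable (Function.uncurry D)) :
    Measurable fun t => ∫ p in openSquare t,
      Real.exp (-k * (2 * t - p.1 - p.2)) * D p.1 p.2 := by
  have hD' : Measurable fun q : ℝ × ℝ × ℝ => D q.2.1 q.2.2 := hD.comp measurable_snd
  have hS : MeasurableSet {q : ℝ × ℝ × ℝ | q.2 ∈ openSquare q.1} := by
    unfold openSquare
    simp only [Set.mem_prod, Set.mem_Ioo]
    measurability
  have hm : Measurable ({q : ℝ × ℝ × ℝ | q.2 ∈ openSquare q.1}.indicator fun q =>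
      Real.exp (-k * (2 * q.1 - q.2.1 - q.2.2)) * D q.2.1 q.2.2) :=
    Measurable.indicator (Measurable.mul (by fun_prop) hD') hS
  have := hm.stronglyMeasurable.integral_prod_right' (ν := (volume : Measure (ℝ × ℝ)))
  convert this.measurable using 2 with t
  rw [← integral_indicator (measurableSet_openSquare t)]
  rfl

/-- Fubini: for `t > 0` the iterated interval integrals are an integral over the open square. -/
lemma iterated_eq_variance (hk : 0 < k) (hβ : β ∈ Set.Ioo (1 / 2 : ℝ) 1)
    (hD : Measurable (Function.uncurry D))
    (hDbound : ∀ t s : ℝ, 0 < t → 0 < s → t ≠ s →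
      |D t s - Cβ * |t - s| ^ (2 * β - 2)| ≤ Cβ' * (t * s) ^ (β - 1)) {t : ℝ} (ht : 0 < t) :
    ∫ u in (0:ℝ)..t, ∫ v in (0:ℝ)..t, Real.exp (-k * (2 * t - u - v)) * D u v
      = ∫ p in openSquare t, Real.exp (-k * (2 * t - p.1 - p.2)) * D p.1 p.2 := by
  simp_rw [intervalIntegral.integral_of_le ht.le, integral_Ioc_eq_integral_Ioo]
  exact (setIntegral_prod _ (variance_integrableOn hk hβ hD hDbound ht)).symm

end Covariance

/-- Convergence of `b_T = (1/T)∫₀^T ‖e^{−k(t−·)} 1_{[0,t]}‖²_H dt` to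
`C_β Γ(2β−1) k^{−2β}`. -/
theorem bT_tendsto
    (β : ℝ) (hβ : β ∈ Set.Ioo (1/2 : ℝ) 1)
    (Cβ Cβ' : ℝ) (hCβ : 0 < Cβ) (hCβ' : 0 ≤ Cβ')
    (D : ℝ → ℝ → ℝ) (hD : Measurable (Function.uncurry D))
    (hDbound : ∀ t s : ℝ, 0 < t → 0 < s → t ≠ s →
      |D t s - Cβ * |t - s| ^ (2 * β - 2)| ≤ Cβ' * (t * s) ^ (β - 1))
    (k : ℝ) (hk : 0 < k) :
    Tendsto (fun T : ℝ =>
        (1/T) * ∫ t in (0:ℝ)..T, ∫ u in (0:ℝ)..t, ∫ v in (0:ℝ)..t,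
          Real.exp (-k * (2*t - u - v)) * D u v)
      atTop (nhds (Cβ * Real.Gamma (2*β - 1) * k ^ (-(2*β)))) := by
  have ha : -1 < 2 * β - 2 := by linarith [hβ.1]
  have hb : -1 < β - 1 := by linarith [hβ.1]
  have hb0 : β - 1 < 0 := by linarith [hβ.2]
  set V : ℝ → ℝ := fun t => ∫ p in openSquare t,
    Real.exp (-k * (2 * t - p.1 - p.2)) * D p.1 p.2 with hV
  set B : ℝ → ℝ := fun t => ∫ u in (0:ℝ)..t, ouWeight k (β - 1) t u with hB
  have hVB : ∀ t, 0 < t →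
      |V t - Cβ * ∫ p in openSquare t, ouKernel k (2 * β - 2) p| ≤ Cβ' * B t ^ 2 :=
    fun t ht => variance_sub_main_le hk hβ hD hDbound ht
  have hlim : Tendsto V atTop (nhds (Cβ * Real.Gamma (2*β - 1) * k ^ (-(2*β)))) := by
    have hm := (main_tendsto hk ha).const_mul Cβ
    rw [show 2 * β - 2 + 1 = 2 * β - 1 by ring, show 2 * β - 2 + 2 = 2 * β by ring,
      ← mul_assoc] at hm
    have hr : Tendsto (fun t => Cβ' * B t ^ 2) atTop (nhds 0) := by
      simpa using ((ouWeight_integral_tendsto hk hb hb0).pow 2).const_mul Cβ'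
    have hd : Tendsto (fun t => V t - Cβ * ∫ p in openSquare t, ouKernel k (2 * β - 2) p)
        atTop (nhds 0) := by
      refine squeeze_zero_norm' ?_ hr
      filter_upwards [eventually_gt_atTop 0] with t ht using hVB t ht
    simpa using hd.add hm
  obtain ⟨M, hM⟩ := ouWeight_integral_bounded hk hb hb0
  have hbdd : ∀ t, 0 < t → |V t| ≤ Cβ' * M ^ 2
      + Cβ * (Real.Gamma (2 * β - 2 + 1) * k ^ (-(2 * β - 2 + 2))) := by
    intro t ht
    have h1 : B t ^ 2 ≤ M ^ 2 :=
      pow_le_pow_left₀ (ouWeight_integral_nonneg k _ ht) (hM t ht) 2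
    have h2 := mul_le_mul_of_nonneg_left (main_le hk ha t) hCβ.le
    rw [← abs_of_pos hCβ, ← abs_mul, abs_of_pos hCβ] at h2
    have h3 := mul_le_mul_of_nonneg_left h1 hCβ'
    have h4 := abs_add_le (V t - Cβ * ∫ p in openSquare t, ouKernel k (2 * β - 2) p)
      (Cβ * ∫ p in openSquare t, ouKernel k (2 * β - 2) p)
    rw [sub_add_cancel] at h4
    linarith [hVB t ht]
  refine (cesaro_of_bounded (variance_measurable hD) hbdd hlim).congr' ?_
  filter_upwards [eventually_gt_atTop 0] with T hT
  congr 1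
  -- Only `t ∈ (0,T]` matters, and there the iterated integral is `V t`.
  refine intervalIntegral.integral_congr_ae (Eventually.of_forall fun t ht => ?_)
  rw [Set.uIoc_of_le hT.le] at ht
  exact (iterated_eq_variance hk hβ hD hDbound ht.1).symm
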